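/- Let X, Y ⊆ ω. There exists an embedding of pcas of K2^X into B^Y if and only if X is Turing reducible to Y. -/

import Mathlib

namespace PCAEmb

/-! ### Oracle computability -/

/-- Codes for partial functions computable relative to an oracle. -/
inductive OCode : Type
  | zero : OCode
  | succ : OCode
  | left : OCode
  | right : OCode
  | oracle : OCode
  | pair : OCode → OCode → OCode
  | comp : OCode → OCode → OCode
  | prec : OCode → OCode → OCode
  | rfind' : OCode → OCode

/-- Evaluation of an oracle code, relative to a (partial) oracle `O`. -/
def evalo (O : ℕ →. ℕ) : OCode → ℕ →. ℕ
  | .zero => pure 0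
  | .succ => Nat.succ
  | .left => ↑fun n : ℕ => n.unpair.1
  | .right => ↑fun n : ℕ => n.unpair.2
  | .oracle => O
  | .pair cf cg => fun n => Nat.pair <$> evalo O cf n <*> evalo O cg n
  | .comp cf cg => fun n => evalo O cg n >>= evalo O cf
  | .prec cf cg =>
      Nat.unpaired fun a n =>
        n.rec (evalo O cf a) fun y IH => do
          let i ← IH
          evalo O cg (Nat.pair a (Nat.pair y i))
  | .rfind' cf =>
      Nat.unpaired fun a m =>
        (Nat.rfind fun n => (fun x => x = 0) <$> evalo O cf (Nat.pair a (n + m))).map (· + m)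

/-- The standard numbering of oracle codes. -/
def OCode.ofNat : ℕ → OCode
  | 0 => .zero
  | 1 => .succ
  | 2 => .left
  | 3 => .right
  | 4 => .oracle
  | n + 5 =>
    match n % 4 with
    | 0 => .pair (OCode.ofNat (n / 4).unpair.1) (OCode.ofNat (n / 4).unpair.2)
    | 1 => .comp (OCode.ofNat (n / 4).unpair.1) (OCode.ofNat (n / 4).unpair.2)
    | 2 => .prec (OCode.ofNat (n / 4).unpair.1) (OCode.ofNat (n / 4).unpair.2)
    | _ => .rfind' (OCode.ofNat (n / 4).unpair.1)
  decreasing_by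
    all_goals
      have h1 := Nat.unpair_left_le (n / 4)
      have h2 := Nat.unpair_right_le (n / 4)
      have h3 := Nat.div_le_self n 4
      omega

/-- The `e`-th Turing functional with oracle `O` : `Φ_e^O`. -/
def phi (O : ℕ →. ℕ) (e : ℕ) : ℕ →. ℕ := evalo O (OCode.ofNat e)

/-- The characteristic function of a set of naturals, as a (total) partial function. -/
noncomputable def chi (X : Set ℕ) : ℕ →. ℕ :=
  fun n => Part.some (X.indicator (fun _ => 1) n)

/-- `ψ` is partial computable relative to the oracle `O`. -/
def RecursiveIn (O : ℕ →. ℕ) (ψ : ℕ →. ℕ) : Prop := ∃ c : OCode, evalo O c = ψ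

/-- Turing reducibility of sets of naturals. -/
def TuringLE (X Y : Set ℕ) : Prop := RecursiveIn (chi Y) (chi X)

/-- A total function `d : ℕ → ℕ` is `Y`-computable. -/
def ComputableIn (Y : Set ℕ) (d : ℕ → ℕ) : Prop :=
  RecursiveIn (chi Y) (fun n => Part.some (d n))

/-- A binary relation on `ℕ` is `Y`-c.e. -/
def CEIn (Y : Set ℕ) (R : ℕ → ℕ → Prop) : Prop :=
  ∃ c : OCode, ∀ n m, R n m ↔ (evalo (chi Y) c (Nat.pair n m)).Dom

/-- A set `W ⊆ ℕ` is `Y`-c.e. -/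
def CE1In (Y : Set ℕ) (W : Set ℕ) : Prop :=
  ∃ c : OCode, ∀ n, n ∈ W ↔ (evalo (chi Y) c n).Dom

/-- The canonical finite set `D_u` with code `u` (binary coding). -/
def Du (u : ℕ) : Set ℕ := {k | u.testBit k}

/-- Enumeration reducibility: `Z ≤ₑ Y`. -/
def EnumLE (Z Y : Set ℕ) : Prop :=
  ∃ W : Set ℕ, CE1In ∅ W ∧ ∀ x, x ∈ Z ↔ ∃ u, Nat.pair x u ∈ W ∧ Du u ⊆ Y

/-- The Turing jump `X'` of a set `X`. -/
def jump (X : Set ℕ) : Set ℕ := {e | (phi (chi X) e e).Dom}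

/-- The halting set `K = {e : φ_e(e)↓}`. -/
def Khalt : Set ℕ := jump ∅

/-! ### Partial combinatory algebras -/

/-- `k·a·b` as a partial element. -/
def app2 {α : Type*} (app : α → α → Part α) (a b c : α) : Part α :=
  (app a b).bind fun x => app x c

/-- `s·a·b·c` as a partial element. -/
def app3 {α : Type*} (app : α → α → Part α) (a b c d : α) : Part α :=
  (app2 app a b c).bind fun x => app x d

/-- A partial applicative structure is a pca if it has (distinct) combinators `s` and `k`. -/
def IsPCA {α : Type*} (app : α → α → Part α) : Prop :=
  ∃ s k : α, s ≠ k ∧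
    (∀ a b : α, app2 app k a b = Part.some a) ∧
    (∀ a b : α, (app2 app s a b).Dom) ∧
    (∀ a b c : α,
      app3 app s a b c = (app a c).bind fun x => (app b c).bind fun y => app x y)

/-- An embedding of partial combinatory algebras: an injection that preserves
(defined) application. -/
def IsPCAEmbedding {α β : Type*} (appA : α → α → Part α) (appB : β → β → Part β)
    (f : α → β) : Prop :=
  Function.Injective f ∧ ∀ a a' c : α, c ∈ appA a a' → f c ∈ appB (f a) (f a')

/-! ### Partial numberings -/

/-- `γ : ℕ ⇀ α` is a partial numbering (i.e. surjective). -/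
def IsNumbering {α : Type*} (γ : ℕ →. α) : Prop := ∀ a : α, ∃ n, a ∈ γ n

/-- `d` is an `(a⊥, a⊤)`-decider for `X` with respect to `γ`. -/
def IsDecider {α : Type*} (γ : ℕ →. α) (abot atop : α) (X : Set ℕ) (d : ℕ → ℕ) : Prop :=
  ∀ n, (n ∉ X → γ (d n) = Part.some abot) ∧ (n ∈ X → γ (d n) = Part.some atop)

/-- `γ` has `Y`-c.e. inequivalence. -/
def CEInequiv {α : Type*} (Y : Set ℕ) (γ : ℕ →. α) : Prop :=
  ∃ R : ℕ → ℕ → Prop, CEIn Y R ∧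
    ∀ n m, (γ n).Dom → (γ m).Dom → (R n m ↔ γ n ≠ γ m)

/-- `γ` is a `Y`-effectively pca-valued partial numbering: the application is
represented on codes by a partial `Y`-computable function `ψ`. -/
def EffValued {α : Type*} (Y : Set ℕ) (app : α → α → Part α) (γ : ℕ →. α) : Prop :=
  ∃ ψ : ℕ →. ℕ, RecursiveIn (chi Y) ψ ∧
    ∀ (n m : ℕ) (a b c : α), a ∈ γ n → b ∈ γ m → c ∈ app a b →
      ∃ j, j ∈ ψ (Nat.pair n m) ∧ c ∈ γ j

/-- `γ` is a strongly `Y`-effectively pca-valued partial numbering. -/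
def StrongEffValued {α : Type*} (Y : Set ℕ) (app : α → α → Part α) (γ : ℕ →. α) : Prop :=
  ∃ ψ : ℕ →. ℕ, RecursiveIn (chi Y) ψ ∧
    (∀ (n m : ℕ) (a b c : α), a ∈ γ n → b ∈ γ m → c ∈ app a b →
      ∃ j, j ∈ ψ (Nat.pair n m) ∧ c ∈ γ j) ∧
    (∀ (n m k l : ℕ) (a b a' b' c : α), a ∈ γ n → b ∈ γ m → a' ∈ γ k → b' ∈ γ l →
      c ∈ app a b → c ∈ app a' b' → ψ (Nat.pair n m) = ψ (Nat.pair k l))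

/-! ### The models -/

/-- Kleene's first model relativized to `X`: application `n · m = Φ_n^X(m)`. -/
noncomputable def k1App (X : Set ℕ) : ℕ → ℕ → Part ℕ := fun n m => phi (chi X) n m

/-- A total function as a partial function. -/
def toPFun (g : ℕ → ℕ) : ℕ →. ℕ := fun n => Part.some (g n)

/-- Join `f ⊕ g` of two partial functions. -/
def pjoin (f g : ℕ →. ℕ) : ℕ →. ℕ := fun n =>
  if n % 2 = 0 then f (n / 2) else g (n / 2)

/-- The totalization of a partial function, as a partial element of `ℕ → ℕ`:
defined iff `ψ` is total. -/
def partToTotal (ψ : ℕ →. ℕ) : Part (ℕ → ℕ) :=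
  ⟨∀ n, (ψ n).Dom, fun H n => (ψ n).get (H n)⟩

/-- Application in Kleene's second model `K₂`: `g · h = Φ^{g⊕h}_{g 0}`,
defined iff this function is total. -/
def k2App (g h : ℕ → ℕ) : Part (ℕ → ℕ) :=
  partToTotal (phi (pjoin (toPFun g) (toPFun h)) (g 0))

/-- Application in van Oosten's sequential model `B`: `θ · ρ = Φ^{θ⊕ρ}_{θ 0}`
(always defined, as a partial function). -/
def bApp (θ ρ : ℕ →. ℕ) : Part (ℕ →. ℕ) :=
  Part.some (fun n => (θ 0).bind fun e => phi (pjoin θ ρ) e n)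

/-- Restriction of a partial applicative structure to a subset. -/
def subApp {α : Type*} (app : α → α → Part α) (P : α → Prop)
    (a b : Subtype P) : Part (Subtype P) :=
  (app a.1 b.1).bind fun c => Part.assert (P c) fun h => Part.some ⟨c, h⟩

/-- Carrier of `K₂^X` : the total `X`-computable functions. -/
def K2el (X : Set ℕ) : Type := {g : ℕ → ℕ // RecursiveIn (chi X) (toPFun g)}

/-- Application in `K₂^X`. -/
def k2XApp (X : Set ℕ) : K2el X → K2el X → Part (K2el X) :=
  subApp k2App _

/-- Carrier of `B^X` : the partial `X`-computable functions. -/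
def Bel (X : Set ℕ) : Type := {θ : ℕ →. ℕ // RecursiveIn (chi X) θ}

/-- Application in `B^X`. -/
def bXApp (X : Set ℕ) : Bel X → Bel X → Part (Bel X) :=
  subApp bApp _

/-- Application in Scott's graph model `G`. -/
def gApp (A B : Set ℕ) : Part (Set ℕ) :=
  Part.some {n | ∃ u, Nat.pair n u ∈ A ∧ Du u ⊆ B}

/-- Carrier of `G^Z` : the sets enumeration-reducible to `Z`. -/
def Gel (Z : Set ℕ) : Type := {A : Set ℕ // EnumLE A Z}

/-- Application in `G^Z`. -/
def gXApp (Z : Set ℕ) : Gel Z → Gel Z → Part (Gel Z) :=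
  subApp gApp _

/-- `X ⊕ X̄ = {2n : n ∈ X} ∪ {2n+1 : n ∉ X}`. -/
def joinCompl (X : Set ℕ) : Set ℕ :=
  {k | ∃ n, (k = 2 * n ∧ n ∈ X) ∨ (k = 2 * n + 1 ∧ n ∉ X)}

/-! ### The λ-calculus -/

/-- Untyped λ-terms (de Bruijn representation). -/
inductive Lam : Type
  | var : ℕ → Lam
  | app : Lam → Lam → Lam
  | abs : Lam → Lam

/-- Lift (shift up) the free variables `≥ d` of a term. -/
def Lam.lift : Lam → ℕ → Lam
  | .var n, d => if n < d then .var n else .var (n + 1)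
  | .app M N, d => .app (M.lift d) (N.lift d)
  | .abs M, d => .abs (M.lift (d + 1))

/-- Substitution `M[k := N]` (de Bruijn). -/
def Lam.subst : Lam → ℕ → Lam → Lam
  | .var n, k, N => if n = k then N else if k < n then .var (n - 1) else .var n
  | .app M M', k, N => .app (M.subst k N) (M'.subst k N)
  | .abs M, k, N => .abs (M.subst (k + 1) (N.lift 0))

/-- β-equivalence of λ-terms. -/
inductive BetaEq : Lam → Lam → Prop
  | beta (M N : Lam) : BetaEq (.app (.abs M) N) (M.subst 0 N)
  | refl (M : Lam) : BetaEq M M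
  | symm {M N : Lam} : BetaEq M N → BetaEq N M
  | trans {M N P : Lam} : BetaEq M N → BetaEq N P → BetaEq M P
  | appCongr {M M' N N' : Lam} :
      BetaEq M M' → BetaEq N N' → BetaEq (.app M N) (.app M' N')
  | absCongr {M M' : Lam} : BetaEq M M' → BetaEq (.abs M) (.abs M')

/-- βη-equivalence of λ-terms. -/
inductive BetaEtaEq : Lam → Lam → Prop
  | beta (M N : Lam) : BetaEtaEq (.app (.abs M) N) (M.subst 0 N)
  | eta (M : Lam) : BetaEtaEq (.abs (.app (M.lift 0) (.var 0))) M
  | refl (M : Lam) : BetaEtaEq M M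
  | symm {M N : Lam} : BetaEtaEq M N → BetaEtaEq N M
  | trans {M N P : Lam} : BetaEtaEq M N → BetaEtaEq N P → BetaEtaEq M P
  | appCongr {M M' N N' : Lam} :
      BetaEtaEq M M' → BetaEtaEq N N' → BetaEtaEq (.app M N) (.app M' N')
  | absCongr {M M' : Lam} : BetaEtaEq M M' → BetaEtaEq (.abs M) (.abs M')

def lamBetaSetoid : Setoid Lam := ⟨BetaEq, ⟨BetaEq.refl, BetaEq.symm, BetaEq.trans⟩⟩

def lamBetaEtaSetoid : Setoid Lam :=
  ⟨BetaEtaEq, ⟨BetaEtaEq.refl, BetaEtaEq.symm, BetaEtaEq.trans⟩⟩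

/-- The pca `λ` of λ-terms modulo β-equivalence. -/
def LamBeta : Type := Quotient lamBetaSetoid

/-- The pca `λη` of λ-terms modulo βη-equivalence. -/
def LamBetaEta : Type := Quotient lamBetaEtaSetoid

/-- Application in `λ` (total). -/
def lamBetaApp : LamBeta → LamBeta → Part LamBeta := fun a b =>
  Part.some (Quotient.map₂ Lam.app (fun _ _ h1 _ _ h2 => BetaEq.appCongr h1 h2) a b)

/-- Application in `λη` (total). -/
def lamBetaEtaApp : LamBetaEta → LamBetaEta → Part LamBetaEta := fun a b =>
  Part.some (Quotient.map₂ Lam.app (fun _ _ h1 _ _ h2 => BetaEtaEq.appCongr h1 h2) a b)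


/-! ### Proof: basic facts on `evalo` -/

theorem mem_prec {O : ℕ →. ℕ} {cf cg : OCode} {a n : ℕ} :
    evalo O (.prec cf cg) (Nat.pair a n) =
      Nat.rec (evalo O cf a) (fun y IH => IH.bind fun i =>
          evalo O cg (Nat.pair a (Nat.pair y i))) n := by
  simp only [evalo, Nat.unpaired, Nat.unpair_pair]
  rfl

theorem evalo_zero (O : ℕ →. ℕ) (n : ℕ) : evalo O .zero n = Part.some 0 := rfl
theorem evalo_succ (O : ℕ →. ℕ) (n : ℕ) : evalo O .succ n = Part.some (n + 1) := rfl
theorem evalo_left (O : ℕ →. ℕ) (n : ℕ) : evalo O .left n = Part.some n.unpair.1 := rfl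
theorem evalo_right (O : ℕ →. ℕ) (n : ℕ) : evalo O .right n = Part.some n.unpair.2 := rfl
theorem evalo_oracle (O : ℕ →. ℕ) (n : ℕ) : evalo O .oracle n = O n := rfl
theorem evalo_comp (O : ℕ →. ℕ) (cf cg : OCode) (n : ℕ) :
    evalo O (.comp cf cg) n = (evalo O cg n).bind (fun x => evalo O cf x) := rfl
theorem evalo_pair (O : ℕ →. ℕ) (cf cg : OCode) (n : ℕ) :
    evalo O (.pair cf cg) n =
      (evalo O cf n).bind fun x => (evalo O cg n).bind fun y => Part.some (Nat.pair x y) := by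
  ext v
  simp [evalo, Seq.seq]
  grind

theorem ofNat_surj (c : OCode) : ∃ e, OCode.ofNat e = c := by
  induction c with
  | zero => exact ⟨0, by simp [OCode.ofNat]⟩
  | succ => exact ⟨1, by simp [OCode.ofNat]⟩
  | left => exact ⟨2, by simp [OCode.ofNat]⟩
  | right => exact ⟨3, by simp [OCode.ofNat]⟩
  | oracle => exact ⟨4, by simp [OCode.ofNat]⟩
  | pair cf cg hf hg =>
    obtain ⟨a, rfl⟩ := hf
    obtain ⟨b, rfl⟩ := hg
    refine ⟨(4 * Nat.pair a b) + 5, ?_⟩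
    rw [OCode.ofNat]
    have h1 : (4 * Nat.pair a b) % 4 = 0 := by omega
    have h2 : (4 * Nat.pair a b) / 4 = Nat.pair a b := by omega
    rw [h1, h2]
    simp
  | comp cf cg hf hg =>
    obtain ⟨a, rfl⟩ := hf
    obtain ⟨b, rfl⟩ := hg
    refine ⟨(4 * Nat.pair a b + 1) + 5, ?_⟩
    rw [OCode.ofNat]
    have h1 : (4 * Nat.pair a b + 1) % 4 = 1 := by omega
    have h2 : (4 * Nat.pair a b + 1) / 4 = Nat.pair a b := by omega
    rw [h1, h2]
    simp
  | prec cf cg hf hg =>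
    obtain ⟨a, rfl⟩ := hf
    obtain ⟨b, rfl⟩ := hg
    refine ⟨(4 * Nat.pair a b + 2) + 5, ?_⟩
    rw [OCode.ofNat]
    have h1 : (4 * Nat.pair a b + 2) % 4 = 2 := by omega
    have h2 : (4 * Nat.pair a b + 2) / 4 = Nat.pair a b := by omega
    rw [h1, h2]
    simp
  | rfind' cf hf =>
    obtain ⟨a, rfl⟩ := hf
    refine ⟨(4 * Nat.pair a 0 + 3) + 5, ?_⟩
    rw [OCode.ofNat]
    have h1 : (4 * Nat.pair a 0 + 3) % 4 = 3 := by omega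
    have h2 : (4 * Nat.pair a 0 + 3) / 4 = Nat.pair a 0 := by omega
    rw [h1, h2]
    simp

/-- Substitution of a code for the oracle. -/
def OCode.sub (d : OCode) : OCode → OCode
  | .zero => .zero
  | .succ => .succ
  | .left => .left
  | .right => .right
  | .oracle => d
  | .pair a b => .pair (OCode.sub d a) (OCode.sub d b)
  | .comp a b => .comp (OCode.sub d a) (OCode.sub d b)
  | .prec a b => .prec (OCode.sub d a) (OCode.sub d b)
  | .rfind' a => .rfind' (OCode.sub d a)

theorem evalo_sub (O : ℕ →. ℕ) (d c : OCode) :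
    evalo O (OCode.sub d c) = evalo (evalo O d) c := by
  induction c with
  | zero => rfl
  | succ => rfl
  | left => rfl
  | right => rfl
  | oracle => rfl
  | pair a b ha hb => simp only [OCode.sub, evalo, ha, hb]; rfl
  | comp a b ha hb => simp only [OCode.sub, evalo, ha, hb]; rfl
  | prec a b ha hb => simp only [OCode.sub, evalo, ha, hb]; rfl
  | rfind' a ha => simp only [OCode.sub, evalo, ha]; rfl

theorem RecursiveIn.trans {O P Q : ℕ →. ℕ} (h : RecursiveIn P Q) (h' : RecursiveIn O P) :
    RecursiveIn O Q := by
  obtain ⟨c, rfl⟩ := h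
  obtain ⟨d, rfl⟩ := h'
  exact ⟨_, evalo_sub O d c⟩

theorem recursiveIn_of_code (O : ℕ →. ℕ) (c : Nat.Partrec.Code) : RecursiveIn O c.eval := by
  induction c with
  | zero => exact ⟨.zero, rfl⟩
  | succ => exact ⟨.succ, rfl⟩
  | left => exact ⟨.left, rfl⟩
  | right => exact ⟨.right, rfl⟩
  | pair a b ha hb =>
    obtain ⟨a', ha⟩ := ha
    obtain ⟨b', hb⟩ := hb
    exact ⟨.pair a' b', by simp only [evalo, Nat.Partrec.Code.eval, ha, hb]; rfl⟩
  | comp a b ha hb =>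
    obtain ⟨a', ha⟩ := ha
    obtain ⟨b', hb⟩ := hb
    exact ⟨.comp a' b', by simp only [evalo, Nat.Partrec.Code.eval, ha, hb]; rfl⟩
  | prec a b ha hb =>
    obtain ⟨a', ha⟩ := ha
    obtain ⟨b', hb⟩ := hb
    exact ⟨.prec a' b', by simp only [evalo, Nat.Partrec.Code.eval, ha, hb]; rfl⟩
  | rfind' a ha =>
    obtain ⟨a', ha⟩ := ha
    exact ⟨.rfind' a', by simp only [evalo, Nat.Partrec.Code.eval, ha]; rfl⟩

/-- Every primitive recursive function has an oracle code (for any oracle). -/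
theorem exists_code_primrec (O : ℕ →. ℕ) {g : ℕ → ℕ} (hg : Primrec g) :
    ∃ c, ∀ n, evalo O c n = Part.some (g n) := by
  have h : Nat.Partrec (g : ℕ →. ℕ) := Partrec.nat_iff.1 hg.to_comp
  obtain ⟨d, hd⟩ := Nat.Partrec.Code.exists_code.1 h
  obtain ⟨c, hc⟩ := recursiveIn_of_code O d
  refine ⟨c, fun n => ?_⟩
  rw [hc, hd]
  rfl

/-! ### Stagewise evaluation relative to a finite oracle -/

/-- Look up in a finite partial function. -/
def getL (σ : List (Option ℕ)) (j : ℕ) : Option ℕ := (σ[j]?).getD none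

/-- One step of the bounded search. -/
def srch (h : ℕ → Option ℕ) (m : ℕ) : ℕ → Option ℕ
  | 0 => some 0
  | i + 1 => (srch h m i).bind fun t =>
      if t = 0 then (h (i + m)).map (fun x => if x = 0 then i + m + 1 else 0) else some t

/-- Evaluation of a code relative to a finite oracle, with searches bounded by `k`. -/
def evalL (k : ℕ) (σ : List (Option ℕ)) : OCode → ℕ → Option ℕ
  | .zero => fun _ => some 0
  | .succ => fun n => some (n + 1)
  | .left => fun n => some n.unpair.1
  | .right => fun n => some n.unpair.2
  | .oracle => fun n => getL σ n
  | .pair cf cg => fun n =>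
      (evalL k σ cf n).bind fun x => (evalL k σ cg n).map fun y => Nat.pair x y
  | .comp cf cg => fun n => (evalL k σ cg n).bind fun x => evalL k σ cf x
  | .prec cf cg => fun n =>
      Nat.rec (evalL k σ cf n.unpair.1) (fun y IH => IH.bind fun i =>
        evalL k σ cg (Nat.pair n.unpair.1 (Nat.pair y i))) n.unpair.2
  | .rfind' cf => fun n =>
      (srch (fun j => evalL k σ cf (Nat.pair n.unpair.1 j)) n.unpair.2 k).bind fun t =>
        if t = 0 then none else some (t - 1)

theorem srch_zero {h : ℕ → Option ℕ} {m i : ℕ} (hs : srch h m i = some 0) :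
    ∀ j < i, ∃ x, h (j + m) = some (x + 1) := by
  induction i with
  | zero => intro j hj; omega
  | succ i ih =>
    simp only [srch, Option.bind_eq_some_iff] at hs
    obtain ⟨t, ht, hs⟩ := hs
    split_ifs at hs with h0
    · subst h0
      simp only [Option.map_eq_some_iff] at hs
      obtain ⟨x, hx, hs⟩ := hs
      split_ifs at hs with hx0
      intro j hj
      rcases Nat.lt_succ_iff_lt_or_eq.1 hj with hj | rfl
      · exact ih ht j hj
      · exact ⟨x - 1, by rw [hx]; congr 1; omega⟩
    · simp at hs; omega

theorem srch_succ {h : ℕ → Option ℕ} {m i t : ℕ} (hs : srch h m i = some (t + 1)) :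
    ∃ r, t = r + m ∧ h (r + m) = some 0 ∧ ∀ j < r, ∃ x, h (j + m) = some (x + 1) := by
  induction i with
  | zero => simp [srch] at hs
  | succ i ih =>
    simp only [srch, Option.bind_eq_some_iff] at hs
    obtain ⟨t', ht, hs⟩ := hs
    split_ifs at hs with h0
    · subst h0
      simp only [Option.map_eq_some_iff] at hs
      obtain ⟨x, hx, hs⟩ := hs
      split_ifs at hs with hx0
      subst hx0
      exact ⟨i, by omega, hx, srch_zero ht⟩
    · simp only [Option.some.injEq] at hs
      subst hs
      exact ih ht

theorem srch_zero_of {h : ℕ → Option ℕ} {m i : ℕ}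
    (H : ∀ j < i, ∃ x, h (j + m) = some (x + 1)) : srch h m i = some 0 := by
  induction i with
  | zero => rfl
  | succ i ih =>
    obtain ⟨x, hx⟩ := H i (by omega)
    simp [srch, ih (fun j hj => H j (by omega)), hx]

theorem srch_succ_of {h : ℕ → Option ℕ} {m r i : ℕ} (hr : r < i) (h0 : h (r + m) = some 0)
    (H : ∀ j < r, ∃ x, h (j + m) = some (x + 1)) : srch h m i = some (r + m + 1) := by
  induction i with
  | zero => omega
  | succ i ih =>
    rcases Nat.lt_succ_iff_lt_or_eq.1 hr with hr | rfl
    · simp [srch, ih hr]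
    · simp [srch, srch_zero_of H, h0]

theorem mem_rfind' {O : ℕ →. ℕ} {cf : OCode} {n v : ℕ} :
    v ∈ evalo O (.rfind' cf) n ↔ ∃ r, v = r + n.unpair.2 ∧
      0 ∈ evalo O cf (Nat.pair n.unpair.1 (r + n.unpair.2)) ∧
      ∀ j < r, ∃ x, (x + 1) ∈ evalo O cf (Nat.pair n.unpair.1 (j + n.unpair.2)) := by
  simp only [evalo, Nat.unpaired, Part.mem_map_iff]
  constructor
  · rintro ⟨r, hr, rfl⟩
    obtain ⟨h1, h2⟩ := Nat.mem_rfind.1 hr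
    refine ⟨r, rfl, ?_, fun j hj => ?_⟩
    · simpa using h1
    · have := h2 hj
      simp at this
      obtain ⟨x, hx, hx0⟩ := this
      exact ⟨x - 1, by rwa [Nat.sub_add_cancel (by omega)]⟩
  · rintro ⟨r, rfl, h1, h2⟩
    refine ⟨r, Nat.mem_rfind.2 ⟨by simpa using h1, fun {j} hj => ?_⟩, rfl⟩
    obtain ⟨x, hx⟩ := h2 j hj
    simp
    exact ⟨_, hx, by omega⟩

open Filter in
/-- `A` is a stagewise approximation of the partial function `θ`. -/
def Appr (θ : ℕ →. ℕ) (A : ℕ → List (Option ℕ)) : Prop :=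
  (∀ k j v, getL (A k) j = some v → v ∈ θ j) ∧
    (∀ j v, v ∈ θ j → ∀ᶠ k in atTop, getL (A k) j = some v)

theorem evalL_sound {O : ℕ →. ℕ} {σ : List (Option ℕ)} {k : ℕ}
    (h : ∀ j v, getL σ j = some v → v ∈ O j) (c : OCode) :
    ∀ n v, evalL k σ c n = some v → v ∈ evalo O c n := by
  induction c with
  | zero => intro n v hv; simp [evalL] at hv; simp [evalo_zero, hv]
  | succ => intro n v hv; simp [evalL] at hv; simp [evalo_succ, hv]
  | left => intro n v hv; simp [evalL] at hv; simp [evalo_left, hv]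
  | right => intro n v hv; simp [evalL] at hv; simp [evalo_right, hv]
  | oracle => intro n v hv; exact h n v hv
  | pair cf cg hf hg =>
    intro n v hv
    simp only [evalL, Option.bind_eq_some_iff, Option.map_eq_some_iff] at hv
    obtain ⟨x, hx, y, hy, rfl⟩ := hv
    simp only [evalo_pair, Part.mem_bind_iff, Part.mem_some_iff]
    exact ⟨x, hf _ _ hx, y, hg _ _ hy, rfl⟩
  | comp cf cg hf hg =>
    intro n v hv
    simp only [evalL, Option.bind_eq_some_iff] at hv
    obtain ⟨x, hx, hv⟩ := hv
    simp only [evalo_comp, Part.mem_bind_iff]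
    exact ⟨x, hg _ _ hx, hf _ _ hv⟩
  | prec cf cg hf hg =>
    intro n v hv
    obtain ⟨a, m, rfl⟩ : ∃ a m, n = Nat.pair a m := ⟨_, _, (Nat.pair_unpair n).symm⟩
    rw [mem_prec]
    simp only [evalL, Nat.unpair_pair] at hv
    induction m generalizing v with
    | zero => exact hf _ _ hv
    | succ m ih =>
      simp only [Option.bind_eq_some_iff] at hv
      obtain ⟨i, hi, hv⟩ := hv
      simp only [Part.mem_bind_iff]
      exact ⟨i, ih _ hi, hg _ _ hv⟩
  | rfind' cf hf =>
    intro n v hv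
    simp only [evalL, Option.bind_eq_some_iff] at hv
    obtain ⟨t, ht, hv⟩ := hv
    split_ifs at hv with h0
    obtain ⟨t, rfl⟩ := Nat.exists_eq_succ_of_ne_zero h0
    obtain ⟨r, rfl, h1, h2⟩ := srch_succ ht
    rw [mem_rfind']
    refine ⟨r, by simpa using hv.symm, hf _ _ h1, fun j hj => ?_⟩
    obtain ⟨x, hx⟩ := h2 j hj
    exact ⟨x, hf _ _ hx⟩

open Filter in
theorem evalL_complete {O : ℕ →. ℕ} {A : ℕ → List (Option ℕ)} (h : Appr O A) (c : OCode) :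
    ∀ n v, v ∈ evalo O c n → ∀ᶠ k in atTop, evalL k (A k) c n = some v := by
  induction c with
  | zero => intro n v hv; simp [evalo_zero] at hv; simp [evalL, hv]
  | succ => intro n v hv; simp [evalo_succ] at hv; simp [evalL, hv]
  | left => intro n v hv; simp [evalo_left] at hv; simp [evalL, hv]
  | right => intro n v hv; simp [evalo_right] at hv; simp [evalL, hv]
  | oracle => intro n v hv; exact h.2 n v hv
  | pair cf cg hf hg =>
    intro n v hv
    simp only [evalo_pair, Part.mem_bind_iff, Part.mem_some_iff] at hv
    obtain ⟨x, hx, y, hy, rfl⟩ := hv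
    filter_upwards [hf _ _ hx, hg _ _ hy] with k h1 h2
    simp [evalL, h1, h2]
  | comp cf cg hf hg =>
    intro n v hv
    simp only [evalo_comp, Part.mem_bind_iff] at hv
    obtain ⟨x, hx, hv⟩ := hv
    filter_upwards [hg _ _ hx, hf _ _ hv] with k h1 h2
    simp [evalL, h1, h2]
  | prec cf cg hf hg =>
    intro n v hv
    obtain ⟨a, m, rfl⟩ : ∃ a m, n = Nat.pair a m := ⟨_, _, (Nat.pair_unpair n).symm⟩
    rw [mem_prec] at hv
    simp only [evalL, Nat.unpair_pair]
    induction m generalizing v with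
    | zero => exact hf _ _ hv
    | succ m ih =>
      simp only [Part.mem_bind_iff] at hv
      obtain ⟨i, hi, hv⟩ := hv
      filter_upwards [ih _ hi, hg _ _ hv] with k h1 h2
      simp only [h1, Option.bind_some, h2]
  | rfind' cf hf =>
    intro n v hv
    rw [mem_rfind'] at hv
    obtain ⟨r, rfl, h1, h2⟩ := hv
    have h3 : ∀ᶠ k in atTop, ∀ j ∈ Set.Iio r, ∃ x,
        evalL k (A k) cf (Nat.pair n.unpair.1 (j + n.unpair.2)) = some (x + 1) := by
      rw [Filter.eventually_all_finite (Set.finite_Iio r)]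
      intro j hj
      obtain ⟨x, hx⟩ := h2 j hj
      filter_upwards [hf _ _ hx] with k hk
      exact ⟨x, hk⟩
    filter_upwards [hf _ _ h1, h3, eventually_gt_atTop r] with k h4 h5 h6
    simp only [evalL]
    rw [srch_succ_of (h := fun j => evalL k (A k) cf (Nat.pair n.unpair.1 j)) h6 h4
      (fun j hj => h5 j hj)]
    simp

/-- Stage `k` of the approximation of `evalo O c`. -/
def stepL (c : OCode) (k : ℕ) (σ : List (Option ℕ)) : List (Option ℕ) :=
  (List.range k).map fun j => evalL k σ c j

/-- Stage `k` of the approximation of a join. -/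
def joinL (k : ℕ) (σ τ : List (Option ℕ)) : List (Option ℕ) :=
  (List.range k).map fun j => if j % 2 = 0 then getL σ (j / 2) else getL τ (j / 2)

theorem getL_map_range (k : ℕ) (g : ℕ → Option ℕ) (j : ℕ) :
    getL ((List.range k).map g) j = if j < k then g j else none := by
  unfold getL
  split_ifs with h
  · simp [h]
  · rw [List.getElem?_eq_none (by simp; omega)]
    rfl

open Filter in
theorem Appr.step {O : ℕ →. ℕ} {A : ℕ → List (Option ℕ)} (h : Appr O A) (c : OCode) :
    Appr (evalo O c) (fun k => stepL c k (A k)) := by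
  constructor
  · intro k j v hv
    simp only [stepL, getL_map_range] at hv
    split_ifs at hv
    exact evalL_sound (h.1 k) c j v hv
  · intro j v hv
    filter_upwards [evalL_complete h c j v hv, eventually_gt_atTop j] with k h1 h2
    simp [stepL, getL_map_range, h1, h2]

open Filter in
theorem Appr.join {θ ρ : ℕ →. ℕ} {A B : ℕ → List (Option ℕ)} (h : Appr θ A) (h' : Appr ρ B) :
    Appr (pjoin θ ρ) (fun k => joinL k (A k) (B k)) := by
  constructor
  · intro k j v hv
    simp only [joinL, getL_map_range] at hv
    unfold pjoin
    split_ifs at hv ⊢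
    · exact h.1 _ _ _ hv
    · exact h'.1 _ _ _ hv
  · intro j v hv
    unfold pjoin at hv
    simp only [joinL, getL_map_range]
    split_ifs at hv with hj
    · filter_upwards [h.2 _ _ hv, eventually_gt_atTop j] with k h1 h2
      simp [h1, h2, hj]
    · filter_upwards [h'.2 _ _ hv, eventually_gt_atTop j] with k h1 h2
      simp [h1, h2, hj]

/-- Initial segments of the characteristic function. -/
noncomputable def seg (Y : Set ℕ) (k : ℕ) : List (Option ℕ) :=
  (List.range k).map fun j => some (Y.indicator (fun _ => 1) j)

open Filter in
theorem appr_seg (Y : Set ℕ) : Appr (chi Y) (seg Y) := by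
  constructor
  · intro k j v hv
    simp only [seg, getL_map_range] at hv
    split_ifs at hv
    simp only [Option.some.injEq] at hv
    simp [chi, hv]
  · intro j v hv
    filter_upwards [eventually_gt_atTop j] with k h2
    simp only [chi, Part.mem_some_iff] at hv
    simp [seg, getL_map_range, h2, hv]

/-! ### Primitive recursiveness of the approximations -/

theorem primrec_getL {α : Type*} [Primcodable α] {s : α → List (Option ℕ)} {j : α → ℕ}
    (hs : Primrec s) (hj : Primrec j) : Primrec fun a => getL (s a) (j a) :=
  Primrec.option_getD.comp (Primrec.list_getElem?.comp hs hj) (Primrec.const none)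

theorem primrec_srch {α : Type*} [Primcodable α] {h : α → ℕ → Option ℕ} {m i : α → ℕ}
    (hh : Primrec₂ h) (hm : Primrec m) (hi : Primrec i) :
    Primrec fun a => srch (h a) (m a) (i a) := by
  have key : Primrec fun a => (Nat.rec (some 0) (fun i (s : Option ℕ) => s.bind fun t =>
      if t = 0 then (h a (i + m a)).map (fun x => if x = 0 then i + m a + 1 else 0)
      else some t) (i a) : Option ℕ) := by
    refine Primrec.nat_rec' (h := fun a (q : ℕ × Option ℕ) => q.2.bind fun t =>
      if t = 0 then (h a (q.1 + m a)).map (fun x => if x = 0 then q.1 + m a + 1 else 0)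
      else some t) hi (Primrec.const _) ?_
    refine Primrec.option_bind (Primrec.snd.comp Primrec.snd) ?_
    have him : Primrec fun p : (α × ℕ × Option ℕ) × ℕ => p.1.2.1 + m p.1.1 :=
      Primrec.nat_add.comp (Primrec.fst.comp (Primrec.snd.comp Primrec.fst))
        (hm.comp (Primrec.fst.comp Primrec.fst))
    refine Primrec.ite (Primrec.eq.comp Primrec.snd (Primrec.const 0)) ?_
      (Primrec.option_some.comp Primrec.snd)
    refine Primrec.option_map (hh.comp (Primrec.fst.comp Primrec.fst) him) ?_
    exact Primrec.ite (Primrec.eq.comp Primrec.snd (Primrec.const 0))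
      (Primrec.succ.comp (him.comp Primrec.fst)) (Primrec.const 0)
  refine key.of_eq fun a => ?_
  generalize i a = n
  induction n with
  | zero => rfl
  | succ n ih => simp only [srch, ← ih]

set_option maxHeartbeats 1000000 in
theorem primrec_evalL (c : OCode) :
    Primrec fun p : (ℕ × List (Option ℕ)) × ℕ => evalL p.1.1 p.1.2 c p.2 := by
  induction c with
  | zero => exact Primrec.const _
  | succ => exact Primrec.option_some.comp (Primrec.succ.comp Primrec.snd)
  | left =>
    exact Primrec.option_some.comp (Primrec.fst.comp (Primrec.unpair.comp Primrec.snd))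
  | right =>
    exact Primrec.option_some.comp (Primrec.snd.comp (Primrec.unpair.comp Primrec.snd))
  | oracle => exact primrec_getL (Primrec.snd.comp Primrec.fst) Primrec.snd
  | pair cf cg hf hg =>
    refine Primrec.option_bind hf ?_
    refine Primrec.option_map (hg.comp Primrec.fst) ?_
    exact Primrec₂.natPair.comp (Primrec.snd.comp Primrec.fst) Primrec.snd
  | comp cf cg hf hg =>
    refine Primrec.option_bind hg ?_
    exact hf.comp (Primrec.pair (Primrec.fst.comp Primrec.fst) Primrec.snd)
  | prec cf cg hf hg =>
    have hu := Primrec.unpair.comp (Primrec.snd (α := ℕ × List (Option ℕ)) (β := ℕ))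
    refine Primrec.nat_rec' (h := fun (p : (ℕ × List (Option ℕ)) × ℕ) (q : ℕ × Option ℕ) =>
        q.2.bind fun i =>
          evalL p.1.1 p.1.2 cg (Nat.pair p.2.unpair.1 (Nat.pair q.1 i)))
      (Primrec.snd.comp hu) (hf.comp (Primrec.pair Primrec.fst (Primrec.fst.comp hu))) ?_
    have h1 : Primrec fun r : (((ℕ × List (Option ℕ)) × ℕ) × ℕ × Option ℕ) × ℕ =>
        r.1.1.2.unpair.1 :=
      Primrec.fst.comp (hu.comp (Primrec.fst.comp Primrec.fst))
    have h2 : Primrec fun r : (((ℕ × List (Option ℕ)) × ℕ) × ℕ × Option ℕ) × ℕ =>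
        Nat.pair r.1.2.1 r.2 :=
      Primrec₂.natPair.comp (Primrec.fst.comp (Primrec.snd.comp Primrec.fst)) Primrec.snd
    have h3 : Primrec fun r : (((ℕ × List (Option ℕ)) × ℕ) × ℕ × Option ℕ) × ℕ =>
        (r.1.1.1, Nat.pair r.1.1.2.unpair.1 (Nat.pair r.1.2.1 r.2)) :=
      Primrec.pair (Primrec.fst.comp (Primrec.fst.comp Primrec.fst)) (Primrec₂.natPair.comp h1 h2)
    exact Primrec.option_bind (Primrec.snd.comp Primrec.snd) (Primrec.to₂ (hg.comp h3))
  | rfind' cf hf =>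
    have hu := Primrec.unpair.comp (Primrec.snd (α := ℕ × List (Option ℕ)) (β := ℕ))
    have h1 : Primrec fun r : ((ℕ × List (Option ℕ)) × ℕ) × ℕ =>
        (r.1.1, Nat.pair r.1.2.unpair.1 r.2) :=
      Primrec.pair (Primrec.fst.comp Primrec.fst)
        (Primrec₂.natPair.comp (Primrec.fst.comp (hu.comp Primrec.fst)) Primrec.snd)
    have h2 : Primrec₂ fun (p : (ℕ × List (Option ℕ)) × ℕ) (j : ℕ) =>
        evalL p.1.1 p.1.2 cf (Nat.pair p.2.unpair.1 j) := Primrec.to₂ (hf.comp h1)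
    have h3 : Primrec₂ fun (_ : (ℕ × List (Option ℕ)) × ℕ) (t : ℕ) =>
        if t = 0 then none else some (t - 1) :=
      Primrec.to₂ (Primrec.ite (Primrec.eq.comp Primrec.snd (Primrec.const 0))
        (Primrec.const none) (Primrec.option_some.comp (Primrec.pred.comp Primrec.snd)))
    exact Primrec.option_bind
      (primrec_srch h2 (Primrec.snd.comp hu) (Primrec.fst.comp Primrec.fst)) h3

theorem primrec_stepL {α : Type*} [Primcodable α] (c : OCode) {k : α → ℕ}
    {s : α → List (Option ℕ)} (hk : Primrec k) (hs : Primrec s) :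
    Primrec fun a => stepL c (k a) (s a) := by
  refine Primrec.list_map (Primrec.list_range.comp hk) ?_
  exact (primrec_evalL c).comp (Primrec.pair
    (Primrec.pair (hk.comp Primrec.fst) (hs.comp Primrec.fst)) Primrec.snd)

theorem primrec_joinL {α : Type*} [Primcodable α] {k : α → ℕ}
    {s t : α → List (Option ℕ)} (hk : Primrec k) (hs : Primrec s) (ht : Primrec t) :
    Primrec fun a => joinL (k a) (s a) (t a) := by
  refine Primrec.list_map (Primrec.list_range.comp hk) ?_
  have h2 : Primrec fun p : α × ℕ => p.2 / 2 :=
    Primrec.nat_div.comp Primrec.snd (Primrec.const 2)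
  exact Primrec.ite (Primrec.eq.comp (Primrec.nat_mod.comp Primrec.snd (Primrec.const 2))
      (Primrec.const 0)) (primrec_getL (hs.comp Primrec.fst) h2)
      (primrec_getL (ht.comp Primrec.fst) h2)

/-! ### Post's theorem, relativized -/

theorem exists_code_seg (Y : Set ℕ) :
    ∃ c, ∀ k, evalo (chi Y) c k = Part.some (Encodable.encode (seg Y k)) := by
  have hH : Primrec fun p : ℕ => Encodable.encode
      (((Encodable.decode (α := List (Option ℕ)) p.unpair.1).getD []) ++ [some p.unpair.2]) := by
    refine Primrec.encode.comp (Primrec.list_append.comp (Primrec.option_getD.comp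
      (Primrec.decode.comp (Primrec.fst.comp Primrec.unpair)) (Primrec.const [])) ?_)
    exact Primrec.list_cons.comp (Primrec.option_some.comp (Primrec.snd.comp Primrec.unpair))
      (Primrec.const [])
  obtain ⟨cH, hcH⟩ := exists_code_primrec (chi Y) hH
  obtain ⟨c0, hc0⟩ := exists_code_primrec (chi Y)
    (Primrec.const (α := ℕ) (Encodable.encode (seg Y 0)))
  obtain ⟨ci, hci⟩ := exists_code_primrec (chi Y)
    (Primrec₂.natPair.comp (Primrec.const (α := ℕ) 0) Primrec.id)
  refine ⟨.comp (.prec c0 (.comp cH (.pair (.comp .right .right)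
    (.comp .oracle (.comp .left .right))))) ci, fun k => ?_⟩
  rw [evalo_comp, hci, Part.bind_some, id, mem_prec]
  induction k with
  | zero => exact hc0 0
  | succ k ih =>
    dsimp only at ih ⊢
    rw [ih]
    simp only [evalo_comp, evalo_pair, evalo_right, evalo_left, evalo_oracle, chi,
      Part.bind_some, Nat.unpair_pair, hcH, Encodable.encodek, Option.getD_some]
    simp [seg, List.range_succ]

theorem turingLE_of_tests {X Y : Set ℕ} {p q : ℕ × ℕ × List (Option ℕ) → Bool}
    (hp : Primrec p) (hq : Primrec q)
    (hpX : ∀ n, n ∈ X ↔ ∃ k, p (n, k, seg Y k) = true)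
    (hqX : ∀ n, n ∉ X ↔ ∃ k, q (n, k, seg Y k) = true) : TuringLE X Y := by
  obtain ⟨cs, hcs⟩ := exists_code_seg Y
  have hd : Primrec fun x : ℕ => (x.unpair.1, x.unpair.2.unpair.1,
      (Encodable.decode (α := List (Option ℕ)) x.unpair.2.unpair.2).getD []) := by
    have h2 := Primrec.unpair.comp (Primrec.snd.comp Primrec.unpair)
    exact Primrec.pair (Primrec.fst.comp Primrec.unpair) (Primrec.pair (Primrec.fst.comp h2)
      (Primrec.option_getD.comp (Primrec.decode.comp (Primrec.snd.comp h2)) (Primrec.const [])))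
  obtain ⟨ct, hct⟩ := exists_code_primrec (chi Y)
    (Primrec.cond (Primrec.or.comp (hp.comp hd) (hq.comp hd))
      (Primrec.const 0) (Primrec.const 1))
  obtain ⟨cr, hcr⟩ := exists_code_primrec (chi Y)
    (Primrec.cond (hp.comp hd) (Primrec.const 1) (Primrec.const 0))
  obtain ⟨ci, hci⟩ := exists_code_primrec (chi Y)
    (Primrec₂.natPair.comp Primrec.id (Primrec.const (α := ℕ) 0))
  obtain ⟨cid, hcid⟩ := exists_code_primrec (chi Y) Primrec.id
  -- code sending `⟨n, k⟩` to `⟨n, k, seg k⟩`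
  let cw : OCode := .pair .left (.pair .right (.comp cs .right))
  have hcw : ∀ n k, evalo (chi Y) cw (Nat.pair n k) =
      Part.some (Nat.pair n (Nat.pair k (Encodable.encode (seg Y k)))) := by
    intro n k
    simp [cw, evalo_pair, evalo_left, evalo_right, evalo_comp, hcs]
  have hT : ∀ n k, evalo (chi Y) (.comp ct cw) (Nat.pair n k) =
      Part.some (bif (p (n, k, seg Y k) || q (n, k, seg Y k)) then 0 else 1) := by
    intro n k
    rw [evalo_comp, hcw, Part.bind_some, hct]
    simp
  have hR : ∀ n k, evalo (chi Y) (.comp cr cw) (Nat.pair n k) =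
      Part.some (bif p (n, k, seg Y k) then 1 else 0) := by
    intro n k
    rw [evalo_comp, hcw, Part.bind_some, hcr]
    simp
  refine ⟨.comp (.comp cr cw) (.pair cid (.comp (.rfind' (.comp ct cw)) ci)), ?_⟩
  funext n
  have hex : ∃ k, (p (n, k, seg Y k) || q (n, k, seg Y k)) = true := by
    by_cases hn : n ∈ X
    · obtain ⟨k, hk⟩ := (hpX n).1 hn
      exact ⟨k, by simp [hk]⟩
    · obtain ⟨k, hk⟩ := (hqX n).1 hn
      exact ⟨k, by simp [hk]⟩
  classical
  have hk := Nat.find_spec hex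
  have hmin := fun m => Nat.find_min hex (m := m)
  generalize Nat.find hex = k at hk hmin
  have hrf : evalo (chi Y) (.rfind' (.comp ct cw)) (Nat.pair n 0) = Part.some k := by
    rw [Part.eq_some_iff, mem_rfind']
    simp only [Nat.unpair_pair, Nat.add_zero]
    refine ⟨k, rfl, ?_, fun j hj => ⟨0, ?_⟩⟩
    · rw [hT, hk]; simp
    · have := hmin j hj
      rw [Bool.not_eq_true] at this
      rw [hT, this]; simp
  rw [evalo_comp, evalo_pair, hcid, evalo_comp, hci]
  simp only [Part.bind_some, id, hrf, hR]
  unfold chi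
  by_cases hn : n ∈ X
  · have hq' : q (n, k, seg Y k) = false := by
      by_contra hc
      exact (hqX n).2 ⟨k, by simpa using hc⟩ hn
    rw [hq', Bool.or_false] at hk
    simp [hn, hk]
  · have hp' : p (n, k, seg Y k) = false := by
      by_contra hc
      exact hn ((hpX n).2 ⟨k, by simpa using hc⟩)
    simp [hn, hp']

/-! ### Applications -/

theorem bApp_code (θ : ℕ →. ℕ) : ∃ c, ∀ ρ, bApp θ ρ = Part.some (evalo (pjoin θ ρ) c) := by
  by_cases h : (θ 0).Dom
  · refine ⟨OCode.ofNat ((θ 0).get h), fun ρ => ?_⟩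
    unfold bApp
    congr 1
    funext n
    conv_lhs => rw [← Part.some_get h]
    rw [Part.bind_some]
    rfl
  · refine ⟨.comp .oracle .zero, fun ρ => ?_⟩
    unfold bApp
    congr 1
    funext n
    rw [evalo_comp, evalo_zero, Part.bind_some, evalo_oracle]
    simp [pjoin, Part.eq_none_iff'.2 h]

theorem mem_subApp {α : Type*} {app : α → α → Part α} {P : α → Prop} {a b c : Subtype P}
    (h : c.1 ∈ app a.1 b.1) : c ∈ subApp app P a b := by
  unfold subApp
  rw [Part.mem_bind_iff]
  refine ⟨c.1, h, ?_⟩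
  rw [Part.mem_assert_iff]
  exact ⟨c.2, by simp⟩

theorem of_mem_subApp {α : Type*} {app : α → α → Part α} {P : α → Prop} {a b c : Subtype P}
    (h : c ∈ subApp app P a b) : c.1 ∈ app a.1 b.1 := by
  unfold subApp at h
  rw [Part.mem_bind_iff] at h
  obtain ⟨d, hd, h⟩ := h
  rw [Part.mem_assert_iff] at h
  obtain ⟨_, h⟩ := h
  rw [Part.mem_some_iff] at h
  rw [h]
  exact hd

theorem bXApp_code {Y : Set ℕ} (θ : Bel Y) :
    ∃ c, ∀ ρ τ : Bel Y, τ ∈ bXApp Y θ ρ → τ.1 = evalo (pjoin θ.1 ρ.1) c := by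
  obtain ⟨c, hc⟩ := bApp_code θ.1
  refine ⟨c, fun ρ τ h => ?_⟩
  have h' := of_mem_subApp h
  rw [hc] at h'
  exact Part.mem_some_iff.1 h'

theorem mem_k2App {g h c : ℕ → ℕ}
    (H : ∀ n, phi (pjoin (toPFun g) (toPFun h)) (g 0) n = Part.some (c n)) : c ∈ k2App g h := by
  unfold k2App partToTotal
  refine ⟨fun n => by rw [H]; trivial, ?_⟩
  funext n
  simp [H]

/-- Constant functions as elements of `K₂^X`. -/
def kconst (X : Set ℕ) (n : ℕ) : K2el X := ⟨fun _ => n, by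
  obtain ⟨c, hc⟩ := exists_code_primrec (chi X) (Primrec.const (α := ℕ) n)
  exact ⟨c, funext hc⟩⟩

theorem pjoin_odd (f g : ℕ →. ℕ) (n : ℕ) : pjoin f g (2 * n + 1) = g n := by
  unfold pjoin
  rw [if_neg (by omega)]
  congr 1; omega

theorem pjoin_even (f g : ℕ →. ℕ) (n : ℕ) : pjoin f g (2 * n) = f n := by
  unfold pjoin
  rw [if_pos (by omega)]
  congr 1; omega

/-- A single code computing a primitive recursive function for all oracles. -/
theorem exists_code_uniform {g : ℕ → ℕ} (hg : Primrec g) :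
    ∃ c, ∀ O n, evalo O c n = Part.some (g n) := by
  obtain ⟨c, hc⟩ := exists_code_primrec (fun _ => Part.none) hg
  have mono : ∀ (d : OCode) (O : ℕ →. ℕ) n v,
      v ∈ evalo (fun _ => Part.none) d n → v ∈ evalo O d n := by
    intro d O n v hv
    have hA : Appr (fun _ => Part.none) (fun _ => []) :=
      ⟨by intro k j v h; simp [getL] at h, by intro j v h; simp at h⟩
    obtain ⟨k, hk⟩ := (evalL_complete hA d n v hv).exists
    exact evalL_sound (by intro j v h; simp [getL] at h) d n v hk
  refine ⟨c, fun O n => ?_⟩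
  rw [Part.eq_some_iff]
  apply mono
  rw [hc]
  simp

theorem exists_kS (X : Set ℕ) : ∃ S : K2el X, ∀ n,
    kconst X (n + 1) ∈ k2XApp X S (kconst X n) := by
  obtain ⟨c1, hc1⟩ := exists_code_uniform
    (Primrec.const (α := ℕ) 1)
  obtain ⟨e, he⟩ := ofNat_surj (.comp .succ (.comp .oracle c1))
  refine ⟨kconst X e, fun n => mem_subApp (mem_k2App fun j => ?_)⟩
  simp only [kconst, phi, he, evalo_comp, hc1, Part.bind_some, evalo_oracle]
  have := pjoin_odd (toPFun fun _ => e) (toPFun fun _ => n) 0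
  simp only [Nat.mul_zero, Nat.zero_add] at this
  rw [this]
  simp [toPFun, evalo_succ]

theorem exists_kx (X : Set ℕ) (u w : ℕ) : ∃ x : K2el X, ∀ n,
    (n ∈ X → kconst X u ∈ k2XApp X x (kconst X n)) ∧
    (n ∉ X → kconst X w ∈ k2XApp X x (kconst X n)) := by
  obtain ⟨c1, hc1⟩ := exists_code_uniform (Primrec.const (α := ℕ) 1)
  have hg : Primrec fun n : ℕ => 2 * (n + 1) :=
    Primrec.nat_mul.comp (Primrec.const 2) Primrec.succ
  obtain ⟨c2, hc2⟩ := exists_code_uniform hg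
  obtain ⟨e, he⟩ := ofNat_surj (.comp .oracle (.comp c2 (.comp .oracle c1)))
  have hG : Primrec fun p : ℕ => if p.unpair.1 = 0 then e
      else if p.unpair.2 = 0 then w else u := by
    refine Primrec.ite (Primrec.eq.comp (Primrec.fst.comp Primrec.unpair) (Primrec.const 0))
      (Primrec.const _) ?_
    exact Primrec.ite (Primrec.eq.comp (Primrec.snd.comp Primrec.unpair) (Primrec.const 0))
      (Primrec.const _) (Primrec.const _)
  obtain ⟨cG, hcG⟩ := exists_code_uniform hG
  obtain ⟨cp, hcp⟩ := exists_code_uniform Primrec.pred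
  obtain ⟨cid, hcid⟩ := exists_code_uniform Primrec.id
  have hx : RecursiveIn (chi X) (toPFun fun n => if n = 0 then e
      else if X.indicator (fun _ => 1) (n - 1) = 0 then w else u) := by
    refine ⟨.comp cG (.pair cid (.comp .oracle cp)), ?_⟩
    funext n
    simp only [evalo_comp, evalo_pair, hcid, hcp, Part.bind_some, evalo_oracle, chi, hcG,
      Nat.unpair_pair, id, toPFun, Nat.pred_eq_sub_one]
  refine ⟨⟨_, hx⟩, fun n => ?_⟩
  have key : ∀ v, (if X.indicator (fun _ => 1) n = 0 then w else u) = v →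
      kconst X v ∈ k2XApp X ⟨_, hx⟩ (kconst X n) := by
    intro v hv
    refine mem_subApp (mem_k2App fun j => ?_)
    simp only [kconst, phi, he, evalo_comp, hc1, Part.bind_some, evalo_oracle, if_true]
    have := pjoin_odd (toPFun fun n => if n = 0 then e
      else if X.indicator (fun _ => 1) (n - 1) = 0 then w else u) (toPFun fun _ => n) 0
    simp only [Nat.mul_zero, Nat.zero_add] at this
    rw [this]
    simp only [toPFun, Part.bind_some, hc2]
    rw [pjoin_even]
    rw [← hv]
    rfl
  constructor
  · intro hn
    exact key u (by simp [hn])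
  · intro hn
    exact key w (by simp [hn])

/-- Approximations of the images of the numerals. -/
def iterL (c0 cS cF : OCode) (k : ℕ) (σ : List (Option ℕ)) : ℕ → List (Option ℕ)
  | 0 => stepL c0 k σ
  | n + 1 => stepL cF k (joinL k (stepL cS k σ) (iterL c0 cS cF k σ n))

theorem primrec_iterL (c0 cS cF : OCode) :
    Primrec fun p : ℕ × ℕ × List (Option ℕ) => iterL c0 cS cF p.2.1 p.2.2 p.1 := by
  have hk : Primrec fun p : ℕ × ℕ × List (Option ℕ) => p.2.1 :=
    Primrec.fst.comp Primrec.snd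
  have hs : Primrec fun p : ℕ × ℕ × List (Option ℕ) => p.2.2 :=
    Primrec.snd.comp Primrec.snd
  have key : Primrec fun p : ℕ × ℕ × List (Option ℕ) =>
      (Nat.rec (stepL c0 p.2.1 p.2.2) (fun _ prev =>
        stepL cF p.2.1 (joinL p.2.1 (stepL cS p.2.1 p.2.2) prev)) p.1 : List (Option ℕ)) := by
    refine Primrec.nat_rec' (h := fun (p : ℕ × ℕ × List (Option ℕ))
        (q : ℕ × List (Option ℕ)) =>
        stepL cF p.2.1 (joinL p.2.1 (stepL cS p.2.1 p.2.2) q.2))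
      Primrec.fst (primrec_stepL c0 hk hs) ?_
    exact primrec_stepL cF (hk.comp Primrec.fst) (primrec_joinL (hk.comp Primrec.fst)
      (primrec_stepL cS (hk.comp Primrec.fst) (hs.comp Primrec.fst))
      (Primrec.snd.comp Primrec.snd))
  refine key.of_eq fun p => ?_
  generalize p.1 = n
  induction n with
  | zero => rfl
  | succ n ih => simp only [iterL, ← ih]

theorem exists_test {X Y : Set ℕ} (N : ℕ → Bel Y) (S : Bel Y)
    (hS : ∀ n, N (n + 1) ∈ bXApp Y S (N n)) (x : Bel Y) (m v : ℕ) (T : ℕ → Bel Y)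
    (hT : ∀ n, T n ∈ bXApp Y x (N n)) (hX : ∀ n, n ∈ X ↔ v ∈ (T n).1 m) :
    ∃ p : ℕ × ℕ × List (Option ℕ) → Bool, Primrec p ∧
      ∀ n, n ∈ X ↔ ∃ k, p (n, k, seg Y k) = true := by
  obtain ⟨c0, hc0⟩ := (N 0).2
  obtain ⟨cS, hcS⟩ := S.2
  obtain ⟨cx, hcx⟩ := x.2
  obtain ⟨cF, hcF⟩ := bXApp_code S
  obtain ⟨cG, hcG⟩ := bXApp_code x
  have hN : ∀ n, Appr (N n).1 (fun k => iterL c0 cS cF k (seg Y k) n) := by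
    intro n
    induction n with
    | zero =>
      rw [← hc0]
      exact (appr_seg Y).step c0
    | succ n ih =>
      rw [hcF _ _ (hS n)]
      have h1 := (appr_seg Y).step cS
      rw [hcS] at h1
      exact (h1.join ih).step cF
  have hTA : ∀ n, Appr (T n).1 (fun k => stepL cG k
      (joinL k (stepL cx k (seg Y k)) (iterL c0 cS cF k (seg Y k) n))) := by
    intro n
    rw [hcG _ _ (hT n)]
    have h1 := (appr_seg Y).step cx
    rw [hcx] at h1
    exact (h1.join (hN n)).step cG
  refine ⟨fun p => decide (getL (stepL cG p.2.1 (joinL p.2.1 (stepL cx p.2.1 p.2.2)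
    (iterL c0 cS cF p.2.1 p.2.2 p.1))) m = some v), ?_, fun n => ?_⟩
  · have hk : Primrec fun p : ℕ × ℕ × List (Option ℕ) => p.2.1 :=
      Primrec.fst.comp Primrec.snd
    have hs : Primrec fun p : ℕ × ℕ × List (Option ℕ) => p.2.2 :=
      Primrec.snd.comp Primrec.snd
    exact (Primrec.eq.comp (primrec_getL (primrec_stepL cG hk (primrec_joinL hk
      (primrec_stepL cx hk hs) (primrec_iterL c0 cS cF))) (Primrec.const m))
      (Primrec.const (some v))).decide
  · rw [hX]
    simp only [decide_eq_true_eq]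
    constructor
    · intro h
      exact ((hTA n).2 m v h).exists
    · rintro ⟨k, hk⟩
      exact (hTA n).1 k m v hk

theorem exists_mem_of_ne {f g : ℕ →. ℕ} (h : f ≠ g) :
    ∃ m v, (v ∈ f m ∧ v ∉ g m) ∨ (v ∈ g m ∧ v ∉ f m) := by
  by_contra hc
  push Not at hc
  apply h
  funext m
  ext v
  exact ⟨(hc m v).1, (hc m v).2⟩

theorem forward {X Y : Set ℕ} {f : K2el X → Bel Y}
    (hf : IsPCAEmbedding (k2XApp X) (bXApp Y) f) : TuringLE X Y := by
  classical
  obtain ⟨inj, hom⟩ := hf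
  have hne : (f (kconst X 0)).1 ≠ (f (kconst X 1)).1 := by
    intro h
    have h1 := inj (Subtype.ext h)
    have h2 := congrFun (congrArg Subtype.val h1) 0
    simp [kconst] at h2
  have hab : ∃ a b m v, v ∈ (f (kconst X a)).1 m ∧ v ∉ (f (kconst X b)).1 m := by
    obtain ⟨m, v, h | h⟩ := exists_mem_of_ne hne
    · exact ⟨0, 1, m, v, h⟩
    · exact ⟨1, 0, m, v, h⟩
  obtain ⟨a, b, m, v, hva, hvb⟩ := hab
  obtain ⟨S, hS⟩ := exists_kS X
  have main : ∀ Z : Set ℕ, (Z = X ∨ Z = Xᶜ) → ∃ p : ℕ × ℕ × List (Option ℕ) → Bool,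
      Primrec p ∧ ∀ n, n ∈ Z ↔ ∃ k, p (n, k, seg Y k) = true := by
    intro Z hZ
    have hx : ∃ x : K2el X, ∀ n,
        (n ∈ Z → kconst X a ∈ k2XApp X x (kconst X n)) ∧
        (n ∉ Z → kconst X b ∈ k2XApp X x (kconst X n)) := by
      rcases hZ with rfl | rfl
      · exact exists_kx Z a b
      · obtain ⟨x, hx⟩ := exists_kx X b a
        exact ⟨x, fun n => ⟨fun h => (hx n).2 h, fun h => (hx n).1 (by simpa using h)⟩⟩
    obtain ⟨x, hx⟩ := hx
    refine exists_test (fun n => f (kconst X n)) (f S) (fun n => hom _ _ _ (hS n)) (f x) m v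
      (fun n => if n ∈ Z then f (kconst X a) else f (kconst X b)) (fun n => ?_) (fun n => ?_)
    · by_cases hn : n ∈ Z
      · simp only [hn, if_true]
        exact hom _ _ _ ((hx n).1 hn)
      · simp only [hn, if_false]
        exact hom _ _ _ ((hx n).2 hn)
    · by_cases hn : n ∈ Z
      · simp only [hn, if_true, hva]
      · simp only [hn, if_false, hvb]
  obtain ⟨p, hp, hpX⟩ := main X (Or.inl rfl)
  obtain ⟨q, hq, hqX⟩ := main Xᶜ (Or.inr rfl)
  exact turingLE_of_tests hp hq hpX hqX

theorem toPFun_mem_bApp {g h c : ℕ → ℕ} (H : c ∈ k2App g h) :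
    toPFun c ∈ bApp (toPFun g) (toPFun h) := by
  obtain ⟨hD, rfl⟩ := H
  refine Part.mem_some_iff.2 ?_
  funext n
  have h0 : toPFun g 0 = Part.some (g 0) := rfl
  rw [h0, Part.bind_some]
  exact Part.some_get (hD n)

theorem backward {X Y : Set ℕ} (h : TuringLE X Y) :
    ∃ f : K2el X → Bel Y, IsPCAEmbedding (k2XApp X) (bXApp Y) f := by
  refine ⟨fun g => ⟨toPFun g.1, g.2.trans h⟩, ?_, ?_⟩
  · intro g g' hg
    have h1 := congrArg Subtype.val hg
    apply Subtype.ext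
    funext n
    exact Part.some_injective (congrFun h1 n)
  · intro a a' c hc
    apply mem_subApp
    exact toPFun_mem_bApp (of_mem_subApp hc)

theorem stmt13 (X Y : Set ℕ) :
    (∃ f : K2el X → Bel Y, IsPCAEmbedding (k2XApp X) (bXApp Y) f) ↔
      TuringLE X Y := by
  constructor
  · rintro ⟨f, hf⟩
    exact forward hf
  · exact backward


end PCAEmb
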